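/- arXiv:2401.07952 — 2 statements merged into one kernel-verified Lean document; each statement's English description precedes it below -/
import Mathlib

section
/- Fix x ∈ H, q ∈ K, z, ζ ∈ Ξ, θ ∈ L²(ν₂) and u, u' ∈ L²(ν₁), and define γ₁ : H → ℝ by γ₁(w) := sup_{a∈U}(r(x,q,a,w)−1) if u(w) ≥ u'(w) and γ₁(w) := inf_{a∈U}(r(x,q,a,w)−1) if u(w) < u'(w); assume γ₁ is Borel measurable (this holds e.g. when U is countable). Then η−1 ≤ γ₁(w) ≤ C_r−1 for all w ∈ H, and ψ(x,q,z,ζ,u,θ) − ψ(x,q,z,ζ,u',θ) ≤ ∫_H (u(w)−u'(w)) γ₁(w) dν₁(w). -/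
open MeasureTheory RealInnerProductSpace

/-!
Write `v = u - u'`. At each `w`, the product `v w * γ₁ w` is the supremum over the controls of `v w`
times the control kernel: a nonnegative factor commutes with the supremum, a negative one turns it
into an infimum. Integrating over `w` bounds the difference of the two cost functionals uniformly in
the control, and a uniform bound on a difference passes to the difference of the infima.
-/

open Set Bornology
open scoped NNReal

section ExtremalKernel

variable {U E : Type*} {k : U → E → ℝ} {m M : ℝ}

/-- The kernel `γ₁` attached to a family `k` of control kernels and a function `v` (for the
Hamiltonian, `v = u - u'`): the upper envelope of `k` where `0 ≤ v`, the lower one where `v < 0`. -/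
noncomputable def extremalKernel (k : U → E → ℝ) (v : E → ℝ) (w : E) : ℝ :=
  if 0 ≤ v w then ⨆ a, k a w else ⨅ a, k a w

theorem extremalKernel_mem_Icc [Nonempty U] {w : E} (hk : ∀ a, k a w ∈ Icc m M) (v : E → ℝ) :
    extremalKernel k v w ∈ Icc m M := by
  have hrange : range (k · w) ⊆ Icc m M := range_subset_iff.2 hk
  obtain ⟨a₀⟩ := ‹Nonempty U›
  rw [extremalKernel]
  split_ifs
  · exact ⟨le_ciSup_of_le (bddAbove_Icc.mono hrange) a₀ (hk a₀).1,
      ciSup_le fun a ↦ (hk a).2⟩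
  · exact ⟨le_ciInf fun a ↦ (hk a).1,
      ciInf_le_of_le (bddBelow_Icc.mono hrange) a₀ (hk a₀).2⟩

theorem mul_le_mul_extremalKernel {w : E} (hk_above : BddAbove (range (k · w)))
    (hk_below : BddBelow (range (k · w))) (v : E → ℝ) (a : U) :
    v w * k a w ≤ v w * extremalKernel k v w := by
  rw [extremalKernel]
  split_ifs with hv
  · exact mul_le_mul_of_nonneg_left (le_ciSup hk_above a) hv
  · exact mul_le_mul_of_nonpos_left (ciInf_le hk_below a) (not_le.1 hv).le

end ExtremalKernel

section Integral

variable {U E : Type*} [MeasurableSpace E] {μ : Measure E} {k : U → E → ℝ} {v : E → ℝ} {m M : ℝ}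

theorem integrable_mul_of_mem_Icc {g : E → ℝ} (hv : Integrable v μ)
    (hg_meas : AEStronglyMeasurable g μ) (hg : ∀ w, g w ∈ Icc m M) :
    Integrable (fun w ↦ v w * g w) μ :=
  hv.mul_bdd hg_meas (.of_forall fun w ↦ abs_le_max_abs_abs (hg w).1 (hg w).2)

theorem isBounded_range_integral_mul (hv : Integrable v μ) (hk : ∀ a w, k a w ∈ Icc m M) :
    IsBounded (range fun a ↦ ∫ w, v w * k a w ∂μ) := by
  refine isBounded_iff_forall_norm_le.2 ⟨∫ w, ‖v w‖ * max |m| |M| ∂μ, forall_mem_range.2 fun a ↦ ?_⟩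
  refine norm_integral_le_of_norm_le (hv.norm.mul_const _) (.of_forall fun w ↦ ?_)
  rw [norm_mul]
  gcongr
  exact abs_le_max_abs_abs (hk a w).1 (hk a w).2

theorem integral_mul_le_integral_mul_extremalKernel [Nonempty U] (hv : Integrable v μ)
    (hk_meas : ∀ a, AEStronglyMeasurable (k a) μ) (hk : ∀ a w, k a w ∈ Icc m M)
    (hext_meas : AEStronglyMeasurable (extremalKernel k v) μ) (a : U) :
    ∫ w, v w * k a w ∂μ ≤ ∫ w, v w * extremalKernel k v w ∂μ := by
  refine integral_mono (integrable_mul_of_mem_Icc hv (hk_meas a) (hk a))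
    (integrable_mul_of_mem_Icc hv hext_meas fun w ↦ extremalKernel_mem_Icc (hk · w) v) fun w ↦ ?_
  have hrange : range (k · w) ⊆ Icc m M := range_subset_iff.2 (hk · w)
  exact mul_le_mul_extremalKernel (bddAbove_Icc.mono hrange) (bddBelow_Icc.mono hrange) v a

theorem hamiltonian_kernel_estimate_u_general [Nonempty U] {c : U → ℝ} {u u' : E → ℝ}
    (hc : BddBelow (range c)) (hk_meas : ∀ a, AEStronglyMeasurable (k a) μ)
    (hk : ∀ a w, k a w ∈ Icc m M) (hu : Integrable u μ) (hu' : Integrable u' μ)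
    (hext_meas : AEStronglyMeasurable (extremalKernel k (u - u')) μ) :
    (∀ w, extremalKernel k (u - u') w ∈ Icc m M) ∧
      (⨅ a, (c a + ∫ w, u w * k a w ∂μ)) - ⨅ a, (c a + ∫ w, u' w * k a w ∂μ) ≤
        ∫ w, (u w - u' w) * extremalKernel k (u - u') w ∂μ := by
  refine ⟨fun w ↦ extremalKernel_mem_Icc (hk · w) _, sub_le_iff_le_add.2 (le_add_ciInf fun a ↦ ?_)⟩
  have hbdd : BddBelow (range fun a ↦ c a + ∫ w, u w * k a w ∂μ) :=
    hc.range_add (isBounded_range_integral_mul hu hk).bddBelow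
  have hsub : ∫ w, (u - u') w * k a w ∂μ = ∫ w, u w * k a w ∂μ - ∫ w, u' w * k a w ∂μ := by
    simp only [Pi.sub_apply, sub_mul]
    exact integral_sub (integrable_mul_of_mem_Icc hu (hk_meas a) (hk a))
      (integrable_mul_of_mem_Icc hu' (hk_meas a) (hk a))
  have hle : ∫ w, (u - u') w * k a w ∂μ ≤ ∫ w, (u w - u' w) * extremalKernel k (u - u') w ∂μ :=
    integral_mul_le_integral_mul_extremalKernel (hu.sub hu') hk_meas hk hext_meas a
  calc ⨅ a, (c a + ∫ w, u w * k a w ∂μ) ≤ c a + ∫ w, u w * k a w ∂μ := ciInf_le hbdd a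
    _ ≤ ∫ w, (u w - u' w) * extremalKernel k (u - u') w ∂μ + (c a + ∫ w, u' w * k a w ∂μ) := by
      linarith

end Integral

section RunningCost

variable {U X Y : Type*}

theorem isBounded_range_comp [PseudoMetricSpace X] [PseudoMetricSpace Y] {C : ℝ≥0} {g : X → Y}
    {f : U → X} (hg : LipschitzWith C g) (hf : IsBounded (range f)) : IsBounded (range (g ∘ f)) :=
  range_comp g f ▸ hg.isBounded_image hf

theorem isBounded_range_inner [NormedAddCommGroup X] [InnerProductSpace ℝ X] {f : U → X}
    (hf : IsBounded (range f)) (z : X) : IsBounded (range fun a ↦ ⟪z, f a⟫) :=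
  isBounded_range_comp (innerSL ℝ z).lipschitz hf

theorem bddBelow_range_runningCost [NormedAddCommGroup X] [NormedSpace ℝ X]
    [NormedAddCommGroup Y] [InnerProductSpace ℝ Y] {F : Type*} [MeasurableSpace F] {μ : Measure F}
    {l : U → ℝ} {b : U → X} {ρ : U → Y} {κ : U → F → ℝ} {θ : F → ℝ} {C m M : ℝ}
    (hl : BddBelow (range l)) (hbρ : ∀ a, ‖b a‖ + ‖ρ a‖ ≤ C) (hκ : ∀ a w, κ a w ∈ Icc m M)
    (hθ : Integrable θ μ) (T : X →L[ℝ] Y) (z ζ : Y) :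
    BddBelow (range fun a ↦ l a + ⟪z, T (b a)⟫ + ⟪ζ, ρ a⟫ + ∫ w, θ w * κ a w ∂μ) := by
  have hb : IsBounded (range b) := isBounded_iff_forall_norm_le.2
    ⟨C, forall_mem_range.2 fun a ↦ (le_add_of_nonneg_right (norm_nonneg _)).trans (hbρ a)⟩
  have hρ : IsBounded (range ρ) := isBounded_iff_forall_norm_le.2
    ⟨C, forall_mem_range.2 fun a ↦ (le_add_of_nonneg_left (norm_nonneg _)).trans (hbρ a)⟩
  have hz : BddBelow (range fun a ↦ ⟪z, T (b a)⟫) :=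
    (isBounded_range_inner (isBounded_range_comp T.lipschitz hb) z).bddBelow
  have hζ : BddBelow (range fun a ↦ ⟪ζ, ρ a⟫) := (isBounded_range_inner hρ ζ).bddBelow
  have hint : BddBelow (range fun a ↦ ∫ w, θ w * κ a w ∂μ) :=
    (isBounded_range_integral_mul hθ hκ).bddBelow
  exact ((hl.range_add hz).range_add hζ).range_add hint

end RunningCost

theorem hamiltonian_kernel_estimate_u
    {H K Ξ U : Type*}
    [NormedAddCommGroup H] [InnerProductSpace ℝ H] [CompleteSpace H] [SecondCountableTopology H]
    [MeasurableSpace H] [BorelSpace H]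
    [NormedAddCommGroup K] [InnerProductSpace ℝ K] [CompleteSpace K] [SecondCountableTopology K]
    [MeasurableSpace K] [BorelSpace K]
    [NormedAddCommGroup Ξ] [InnerProductSpace ℝ Ξ] [CompleteSpace Ξ] [SecondCountableTopology Ξ]
    [Nonempty U]
    (ν₁ : Measure H) (ν₂ : Measure K) [IsFiniteMeasure ν₁] [IsFiniteMeasure ν₂]
    (Rinv : H →L[ℝ] Ξ)
    (l : H → K → U → ℝ) (b : H → K → U → H) (ρ : U → Ξ)
    (r : H → K → U → H → ℝ) (γ : U → K → ℝ)
    (Ml Ll M' Lb Lr η Cr η' Cγ : ℝ)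
    (hl_bound : ∀ x q a, |l x q a| ≤ Ml)
    (hl_lip : ∀ x x' q q' a, |l x q a - l x' q' a| ≤ Ll * (‖x - x'‖ + ‖q - q'‖))
    (hb_bound : ∀ x q a, ‖b x q a‖ + ‖ρ a‖ ≤ M')
    (hb_lip : ∀ x x' q q' a, ‖b x q a - b x' q' a‖ ≤ Lb * (‖x - x'‖ + ‖q - q'‖))
    (hη : 0 < η) (hCr : 1 < Cr)
    (hr_lb : ∀ x q a w, η ≤ r x q a w) (hr_ub : ∀ x q a w, r x q a w ≤ Cr)
    (hr_lip : ∀ x x' q q' a w, |r x q a w - r x' q' a w| ≤ Lr * (‖x - x'‖ + ‖q - q'‖))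
    (hη' : 0 < η') (hCγ : 1 < Cγ)
    (hγ_lb : ∀ a w, η' ≤ γ a w) (hγ_ub : ∀ a w, γ a w ≤ Cγ)
    (hr_meas : ∀ x q a, Measurable (fun w => r x q a w))
    (hγ_meas : ∀ a, Measurable (fun w => γ a w))
    (ψ : H → K → Ξ → Ξ → Lp ℝ 2 ν₁ → Lp ℝ 2 ν₂ → ℝ)
    (hψ : ∀ x q z ζ u θ, ψ x q z ζ u θ =
      ⨅ a : U, (l x q a + ⟪z, Rinv (b x q a)⟫ + ⟪ζ, ρ a⟫
        + ∫ w, u w * (r x q a w - 1) ∂ν₁ + ∫ w, θ w * (γ a w - 1) ∂ν₂))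
    (x : H) (q : K) (z ζ : Ξ) (θ : Lp ℝ 2 ν₂) (u u' : Lp ℝ 2 ν₁)
    (γ₁ : H → ℝ) (hγ₁_meas : Measurable γ₁)
    (hγ₁_def : ∀ w, γ₁ w = if u' w ≤ u w then ⨆ a : U, (r x q a w - 1)
      else ⨅ a : U, (r x q a w - 1)) :
    (∀ w, η - 1 ≤ γ₁ w ∧ γ₁ w ≤ Cr - 1) ∧
      ψ x q z ζ u θ - ψ x q z ζ u' θ ≤ ∫ w, (u w - u' w) * γ₁ w ∂ν₁ := by
  obtain rfl : γ₁ = extremalKernel (fun a w ↦ r x q a w - 1) (u - u' : H → ℝ) :=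
    funext fun w ↦ by simp only [hγ₁_def, extremalKernel, Pi.sub_apply, sub_nonneg]
  have hcost := bddBelow_range_runningCost
    ⟨-Ml, forall_mem_range.2 fun a ↦ neg_le_of_abs_le (hl_bound x q a)⟩ (hb_bound x q)
    (fun a w ↦ ⟨sub_le_sub_right (hγ_lb a w) 1, sub_le_sub_right (hγ_ub a w) 1⟩)
    ((Lp.memLp θ).integrable one_le_two) Rinv z ζ
  simpa only [hψ, add_right_comm _ (integral ν₁ _), mem_Icc] using
    hamiltonian_kernel_estimate_u_general hcost
      (fun a ↦ ((hr_meas x q a).sub_const 1).aestronglyMeasurable)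
      (fun a w ↦ ⟨sub_le_sub_right (hr_lb x q a w) 1, sub_le_sub_right (hr_ub x q a w) 1⟩)
      ((Lp.memLp u).integrable one_le_two) ((Lp.memLp u').integrable one_le_two)
      hγ₁_meas.aestronglyMeasurable
end

section
/- Let H and K be real inner product spaces, μ > 0, L_F > 0, T > 0, and let F : H × K → K satisfy ⟨F(x,q) − F(x,q'), q − q'⟩ ≤ −μ‖q−q'‖² for all x ∈ H, q, q' ∈ K, and ‖F(x,q) − F(x',q)‖ ≤ L_F‖x−x'‖ for all x, x' ∈ H, q ∈ K. Let Γ, Γ' : [0,T] → H be continuous, let g : [0,T] → K be continuous, and let q, q̃ : [0,T] → K be differentiable with q'(t) = F(Γ(t), q(t)) + g(t), q̃'(t) = F(Γ'(t), q̃(t)) + g(t) for all t ∈ [0,T] and q(0) = q̃(0). Then ‖q(T) − q̃(T)‖ ≤ L_F ∫₀^T e^{−μ(T−s)} ‖Γ(s) − Γ'(s)‖ ds. -/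
open RealInnerProductSpace

/-!
The difference `v = q - q̃` satisfies `⟪v, v'⟫ ≤ -μ ‖v‖² + L ‖Γ - Γ'‖ ‖v‖`: splitting the drift
difference at `F(Γ, q̃)`, the first half is dissipative and the second is controlled by the
Lipschitz bound. The integrating factor `e^{-μ(T - t)}` absorbs the term `-μ ‖v‖²`, so it remains
to integrate an inequality `⟪w, w'⟫ ≤ ψ ‖w‖`, which formally says `‖w‖' ≤ ψ`. As the norm is not
differentiable at `0`, one integrates `√(‖w‖² + ε²)` instead and lets `ε → 0`.
-/

section NormGrowth

open Set

variable {E : Type*} [NormedAddCommGroup E] [InnerProductSpace ℝ E] {a b : ℝ}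

lemma hasDerivWithinAt_sqrt_norm_sq_add_const {f : ℝ → E} {f' : E} {s : Set ℝ} {x c : ℝ}
    (hc : 0 < c) (hf : HasDerivWithinAt f f' s x) :
    HasDerivWithinAt (fun y ↦ √(‖f y‖ ^ 2 + c)) (⟪f x, f'⟫ / √(‖f x‖ ^ 2 + c)) s x := by
  have hne : ‖f x‖ ^ 2 + c ≠ 0 := by positivity
  exact ((hf.norm_sq.add_const c).sqrt hne).congr_deriv (mul_div_mul_left _ _ two_ne_zero)

theorem norm_le_norm_add_integral_of_inner_deriv_right_le {w w' : ℝ → E} {ψ : ℝ → ℝ}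
    (hab : a ≤ b) (hw : ContinuousOn w (Icc a b))
    (hw' : ∀ t ∈ Ioo a b, HasDerivWithinAt w (w' t) (Ioi t) t)
    (hψ : IntervalIntegrable ψ MeasureTheory.volume a b) (hψ₀ : ∀ t ∈ Ioo a b, 0 ≤ ψ t)
    (hinner : ∀ t ∈ Ioo a b, ⟪w t, w' t⟫ ≤ ψ t * ‖w t‖) :
    ‖w b‖ ≤ ‖w a‖ + ∫ t in a..b, ψ t := by
  refine le_of_forall_pos_le_add fun ε hε ↦ ?_
  have norm_le_sqrt (t : ℝ) : ‖w t‖ ≤ √(‖w t‖ ^ 2 + ε ^ 2) :=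
    Real.le_sqrt_of_sq_le (le_add_of_nonneg_right (sq_nonneg ε))
  have sqrt_le_add : √(‖w a‖ ^ 2 + ε ^ 2) ≤ ‖w a‖ + ε :=
    Real.sqrt_le_iff.2 ⟨by positivity, by nlinarith [norm_nonneg (w a)]⟩
  have deriv_le : ∀ t ∈ Ioo a b, ⟪w t, w' t⟫ / √(‖w t‖ ^ 2 + ε ^ 2) ≤ ψ t := fun t ht ↦
    (div_le_iff₀ (by positivity)).2 <|
      (hinner t ht).trans (mul_le_mul_of_nonneg_left (norm_le_sqrt t) (hψ₀ t ht))
  have sub_le : √(‖w b‖ ^ 2 + ε ^ 2) - √(‖w a‖ ^ 2 + ε ^ 2) ≤ ∫ t in a..b, ψ t :=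
    intervalIntegral.sub_le_integral_of_hasDeriv_right_of_le hab
      ((hw.norm.pow 2).add continuousOn_const).sqrt
      (fun t ht ↦ hasDerivWithinAt_sqrt_norm_sq_add_const (pow_pos hε 2) (hw' t ht))
      ((intervalIntegrable_iff_integrableOn_Icc_of_le hab).1 hψ) deriv_le
  linarith [norm_le_sqrt b]

theorem norm_le_exp_mul_norm_add_integral_of_inner_deriv_right_le {v v' : ℝ → E} {φ : ℝ → ℝ}
    {μ : ℝ} (hab : a ≤ b) (hv : ContinuousOn v (Icc a b))
    (hv' : ∀ t ∈ Ioo a b, HasDerivWithinAt v (v' t) (Ioi t) t)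
    (hφ : IntervalIntegrable φ MeasureTheory.volume a b) (hφ₀ : ∀ t ∈ Ioo a b, 0 ≤ φ t)
    (hinner : ∀ t ∈ Ioo a b, ⟪v t, v' t⟫ ≤ -μ * ‖v t‖ ^ 2 + φ t * ‖v t‖) :
    ‖v b‖ ≤ Real.exp (-μ * (b - a)) * ‖v a‖ + ∫ t in a..b, Real.exp (-μ * (b - t)) * φ t := by
  let e (t : ℝ) : ℝ := Real.exp (-μ * (b - t))
  have he₀ (t : ℝ) : 0 < e t := Real.exp_pos _
  have he : Continuous e := by fun_prop
  have he' (t : ℝ) : HasDerivAt e (e t * μ) t :=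
    (((hasDerivAt_id t).const_sub b).const_mul (-μ)).exp.congr_deriv (by simp [e])
  have norm_smul_v (t : ℝ) : ‖e t • v t‖ = e t * ‖v t‖ := norm_smul_of_nonneg (he₀ t).le _
  have inner_le (t : ℝ) (ht : t ∈ Ioo a b) :
      ⟪e t • v t, e t • v' t + (e t * μ) • v t⟫ ≤ e t * φ t * ‖e t • v t‖ :=
    calc ⟪e t • v t, e t • v' t + (e t * μ) • v t⟫
        = e t ^ 2 * (⟪v t, v' t⟫ + μ * ‖v t‖ ^ 2) := by
          simp only [inner_add_right, real_inner_smul_left, real_inner_smul_right,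
            real_inner_self_eq_norm_sq]
          ring
      _ ≤ e t ^ 2 * (φ t * ‖v t‖) := by gcongr; linarith [hinner t ht]
      _ = e t * φ t * ‖e t • v t‖ := by rw [norm_smul_v]; ring
  have weighted := norm_le_norm_add_integral_of_inner_deriv_right_le (w := fun t ↦ e t • v t) hab
    (he.continuousOn.smul hv) (fun t ht ↦ (he' t).hasDerivWithinAt.smul (hv' t ht))
    (hφ.continuousOn_mul he.continuousOn) (fun t ht ↦ mul_nonneg (he₀ t).le (hφ₀ t ht)) inner_le
  simpa only [norm_smul_v, e, sub_self, mul_zero, Real.exp_zero, one_smul] using weighted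

end NormGrowth

section DissipativeDrift

open Set

variable {H K : Type*} [PseudoMetricSpace H] [NormedAddCommGroup K] [InnerProductSpace ℝ K]
  {μ L : ℝ}

lemma inner_sub_le_of_dissipative_of_lipschitz {F : H → K → K}
    (hdiss : ∀ x p p', ⟪F x p - F x p', p - p'⟫ ≤ -μ * ‖p - p'‖ ^ 2)
    (hlip : ∀ x x' p, ‖F x p - F x' p‖ ≤ L * dist x x') (x x' : H) (p p' : K) :
    ⟪p - p', F x p - F x' p'⟫ ≤ -μ * ‖p - p'‖ ^ 2 + L * dist x x' * ‖p - p'‖ :=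
  calc ⟪p - p', F x p - F x' p'⟫
      = ⟪F x p - F x p', p - p'⟫ + ⟪F x p' - F x' p', p - p'⟫ := by
        rw [← inner_add_left, sub_add_sub_cancel, real_inner_comm]
    _ ≤ -μ * ‖p - p'‖ ^ 2 + ‖F x p' - F x' p'‖ * ‖p - p'‖ :=
        add_le_add (hdiss x p p') (real_inner_le_norm _ _)
    _ ≤ -μ * ‖p - p'‖ ^ 2 + L * dist x x' * ‖p - p'‖ := by gcongr; exact hlip x x' p'

theorem dissipative_difference_estimate_general {a b : ℝ} (hab : a ≤ b) {F : ℝ → H → K → K}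
    (hdiss : ∀ t ∈ Ioo a b, ∀ x p p', ⟪F t x p - F t x p', p - p'⟫ ≤ -μ * ‖p - p'‖ ^ 2)
    (hlip : ∀ t ∈ Ioo a b, ∀ x x' p, ‖F t x p - F t x' p‖ ≤ L * dist x x') {Γ Γ' : ℝ → H}
    (hΓ : IntervalIntegrable (fun t ↦ dist (Γ t) (Γ' t)) MeasureTheory.volume a b)
    {q r : ℝ → K} (hq : ContinuousOn q (Icc a b)) (hr : ContinuousOn r (Icc a b))
    (hq' : ∀ t ∈ Ioo a b, HasDerivWithinAt q (F t (Γ t) (q t)) (Ioi t) t)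
    (hr' : ∀ t ∈ Ioo a b, HasDerivWithinAt r (F t (Γ' t) (r t)) (Ioi t) t) :
    ‖q b - r b‖ ≤ Real.exp (-μ * (b - a)) * ‖q a - r a‖ +
      L * ∫ s in a..b, Real.exp (-μ * (b - s)) * dist (Γ s) (Γ' s) := by
  have forcing_nonneg (t : ℝ) (ht : t ∈ Ioo a b) : 0 ≤ L * dist (Γ t) (Γ' t) :=
    (norm_nonneg _).trans (hlip t ht (Γ t) (Γ' t) 0)
  have estimate := norm_le_exp_mul_norm_add_integral_of_inner_deriv_right_le hab (hq.sub hr)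
    (fun t ht ↦ (hq' t ht).sub (hr' t ht)) (hΓ.const_mul L) forcing_nonneg
    (fun t ht ↦ inner_sub_le_of_dissipative_of_lipschitz (hdiss t ht) (hlip t ht) _ _ _ _)
  simpa only [Pi.sub_apply, mul_left_comm _ L, intervalIntegral.integral_const_mul] using estimate

end DissipativeDrift

/-- two solutions of the fast equation with the same initial datum and
forcing but different slow inputs Γ, Γ' satisfy
‖q(T) − q̃(T)‖ ≤ L_F ∫₀^T e^{−μ(T−s)} ‖Γ(s) − Γ'(s)‖ ds. -/
theorem dissipative_difference_estimate
    {H K : Type*} [NormedAddCommGroup H] [InnerProductSpace ℝ H]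
    [NormedAddCommGroup K] [InnerProductSpace ℝ K]
    (μ LF T : ℝ) (hμ : 0 < μ) (hLF : 0 < LF) (hT : 0 < T)
    (F : H → K → K)
    (hFdiss : ∀ (x : H) (p p' : K), ⟪F x p - F x p', p - p'⟫ ≤ -μ * ‖p - p'‖ ^ 2)
    (hFlip : ∀ (x x' : H) (p : K), ‖F x p - F x' p‖ ≤ LF * ‖x - x'‖)
    (Γ Γ' : ℝ → H)
    (hΓ : ContinuousOn Γ (Set.Icc 0 T)) (hΓ' : ContinuousOn Γ' (Set.Icc 0 T))
    (g : ℝ → K) (hg : ContinuousOn g (Set.Icc 0 T))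
    (q qt : ℝ → K)
    (hq : ∀ t ∈ Set.Icc (0 : ℝ) T, HasDerivAt q (F (Γ t) (q t) + g t) t)
    (hqt : ∀ t ∈ Set.Icc (0 : ℝ) T, HasDerivAt qt (F (Γ' t) (qt t) + g t) t)
    (h0 : q 0 = qt 0) :
    ‖q T - qt T‖ ≤ LF * ∫ s in (0 : ℝ)..T, Real.exp (-μ * (T - s)) * ‖Γ s - Γ' s‖ := by
  simpa [h0, dist_eq_norm] using dissipative_difference_estimate_general hT.le
    (F := fun t x p ↦ F x p + g t) (fun _ _ ↦ by simpa using hFdiss)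
    (fun _ _ ↦ by simpa [dist_eq_norm] using hFlip)
    (by simpa [dist_eq_norm] using (hΓ.sub hΓ').norm.intervalIntegrable_of_Icc hT.le)
    (HasDerivAt.continuousOn hq) (HasDerivAt.continuousOn hqt)
    (fun t ht ↦ (hq t (Set.Ioo_subset_Icc_self ht)).hasDerivWithinAt)
    (fun t ht ↦ (hqt t (Set.Ioo_subset_Icc_self ht)).hasDerivWithinAt)
end
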